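/- arXiv:1706.00204 — 4 statements merged into one kernel-verified Lean document; each statement's English description precedes it below -/
import Mathlib

section
/- Let a > 0 and b ≥ 1, let P be an (a,b)-standard probability measure on ℝ^D with compact support 𝒳, and let X_1, …, X_n be independent random points drawn from P. Then for every u > 0, P(d_H(𝒳, {X_1, …, X_n}) ≥ u) ≤ min{1, (4^b / (a u^b)) · exp(−a (u/2)^b n)}. -/
open MeasureTheory Metric

/-!
Suppose `a (u / 4) ^ b ≤ 1`. A maximal `u / 2`-separated subset of `𝒳` is a `u / 2`-cover of `𝒳`,
and the balls of radius `u / 4` around its points are disjoint, each of mass at least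
`a (u / 4) ^ b`; hence it has at most `4 ^ b / (a u ^ b)` points. If every ball of radius `u / 2`
around them contains a sample point, then the sample is within distance less than `u` of all of `𝒳`.
A given ball of radius `u / 2` is missed by the whole sample with probability at most
`(1 - min 1 (a (u / 2) ^ b)) ^ n ≤ exp (-a (u / 2) ^ b n)`, and the union bound over the cover
concludes. If `a (u / 4) ^ b > 1`, no such ball is missed with positive probability.
-/

open scoped ENNReal NNReal

section Packing

variable {E : Type*} [PseudoMetricSpace E] [MeasurableSpace E] [OpensMeasurableSpace E]
  {μ : Measure E} {K N : Set E} {r : ℝ≥0} {c : ℝ≥0∞}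

theorem encard_mul_le_measure_univ_of_isSeparated (hN : IsSeparated (2 * r) N)
    (hc : ∀ x ∈ N, c ≤ μ (ball x r)) : (N.encard : ℝ≥0∞) * c ≤ μ Set.univ := by
  have hdisj : Pairwise fun x y : N => Disjoint (ball (x : E) r) (ball (y : E) r) := by
    intro x y hxy
    have hdist : (2 * r : ℝ≥0∞) < edist (x : E) y :=
      hN x.2 y.2 (Subtype.coe_injective.ne hxy)
    rw [edist_nndist] at hdist
    have hdist' : 2 * r < nndist (x : E) y := mod_cast hdist
    exact ball_disjoint_ball (by rw [← two_mul]; exact_mod_cast hdist'.le)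
  calc (N.encard : ℝ≥0∞) * c = ∑' _ : N, c := (ENNReal.tsum_const c).symm
    _ ≤ ∑' x : N, μ (ball (x : E) r) := ENNReal.tsum_le_tsum fun x => hc x x.2
    _ ≤ μ Set.univ := tsum_measure_le_measure_univ
        (fun _ => measurableSet_ball.nullMeasurableSet) fun _ _ hxy => (hdisj hxy).aedisjoint

theorem packingNumber_mul_le_measure_univ (hc : ∀ x ∈ K, c ≤ μ (ball x r)) :
    (packingNumber (2 * r) K : ℝ≥0∞) * c ≤ μ Set.univ := by
  simp only [packingNumber, ENat.toENNReal_iSup, ENNReal.iSup_mul, iSup_le_iff]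
  exact fun N hNK hN =>
    encard_mul_le_measure_univ_of_isSeparated (mod_cast hN) fun x hx => hc x (hNK hx)

theorem coveringNumber_mul_le_measure_univ (hc : ∀ x ∈ K, c ≤ μ (ball x r)) :
    (coveringNumber (2 * r) K : ℝ≥0∞) * c ≤ μ Set.univ :=
  (mul_le_mul_left (ENat.toENNReal_mono (coveringNumber_le_packingNumber _ K)) c).trans
    (packingNumber_mul_le_measure_univ hc)

theorem coveringNumber_ne_top_of_le_measure_ball [IsFiniteMeasure μ] (hc₀ : c ≠ 0)
    (hc : ∀ x ∈ K, c ≤ μ (ball x r)) : coveringNumber (2 * r) K ≠ ⊤ := by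
  intro htop
  have hle := coveringNumber_mul_le_measure_univ hc
  rw [htop, ENat.toENNReal_top, ENNReal.top_mul hc₀] at hle
  exact measure_ne_top μ Set.univ (top_le_iff.1 hle)

end Packing

theorem hausdorffDist_lt_of_isCover {E : Type*} [PseudoMetricSpace E] {K N T : Set E} {δ : ℝ≥0}
    {ε : ℝ} (hε : 0 < ε) (hNfin : N.Finite) (hN : IsCover δ K N) (hTK : T ⊆ K)
    (hT : ∀ y ∈ N, ∃ t ∈ T, dist y t < ε) : hausdorffDist K T < δ + ε := by
  -- Finiteness of `N` leaves room below `ε`, which makes the conclusion strict.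
  obtain ⟨η, hη, hη₀, hηε⟩ : ∃ η, (∀ y ∈ N, ∃ t ∈ T, dist y t < η) ∧ 0 < η ∧ η < ε := by
    have hev : ∀ᶠ η in nhdsWithin ε (Set.Iio ε), ∀ y ∈ N, ∃ t ∈ T, dist y t < η := by
      refine (Filter.eventually_all_finite hNfin).2 fun y hy => ?_
      obtain ⟨t, ht, hyt⟩ := hT y hy
      filter_upwards [Ioo_mem_nhdsLT hyt] with η hη using ⟨t, ht, hη.1⟩
    exact (hev.and (Ioo_mem_nhdsLT hε)).exists
  have hle : hausdorffDist K T ≤ δ + η := by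
    refine hausdorffDist_le_of_mem_dist (by positivity) (fun x hx => ?_) fun t ht =>
      ⟨t, hTK ht, by rw [dist_self]; positivity⟩
    obtain ⟨y, hy, hxy⟩ := Set.mem_iUnion₂.1 (hN.subset_iUnion_closedBall hx)
    obtain ⟨t, ht, hyt⟩ := hη y hy
    exact ⟨t, ht, (dist_triangle x y t).trans (add_le_add hxy hyt.le)⟩
  linarith

section Sample

variable {E ι : Type*} [Fintype ι] [MeasurableSpace E] {P : Measure E}

theorem ae_pi_forall_mem [SigmaFinite P] {K : Set E} (hK : ∀ᵐ x ∂P, x ∈ K) :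
    ∀ᵐ X ∂(Measure.pi fun _ : ι => P), ∀ i, X i ∈ K :=
  ae_all_iff.2 fun i => (Measure.quasiMeasurePreserving_eval (fun _ : ι => P) i).ae hK

theorem pi_forall_notMem [SigmaFinite P] (s : Set E) :
    (Measure.pi fun _ : ι => P) {X | ∀ i, X i ∉ s} = P sᶜ ^ Fintype.card ι := by
  have hpi : {X : ι → E | ∀ i, X i ∉ s} = Set.univ.pi fun _ => sᶜ := by
    ext X
    simp
  rw [hpi, Measure.pi_pi, Finset.prod_const, Finset.card_univ]

variable [IsProbabilityMeasure P]

theorem measure_compl_le_exp_neg {s : Set E} {q : ℝ} (hs : MeasurableSet s)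
    (hq : ENNReal.ofReal (min 1 q) ≤ P s) : P sᶜ ≤ ENNReal.ofReal (Real.exp (-q)) := by
  have hreal : 1 ≤ Real.exp (-q) + min 1 q := by
    rcases le_total 1 q with h | h
    · rw [min_eq_left h]
      linarith [Real.exp_pos (-q)]
    · rw [min_eq_right h]
      linarith [Real.one_sub_le_exp_neg q]
  rw [prob_compl_eq_one_sub hs, tsub_le_iff_right]
  calc (1 : ℝ≥0∞) ≤ ENNReal.ofReal (Real.exp (-q) + min 1 q) := ENNReal.one_le_ofReal.2 hreal
    _ ≤ ENNReal.ofReal (Real.exp (-q)) + ENNReal.ofReal (min 1 q) := ENNReal.ofReal_add_le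
    _ ≤ ENNReal.ofReal (Real.exp (-q)) + P s := by gcongr

variable [PseudoMetricSpace E] {K : Set E} {ε : ℝ} {p : ℝ≥0∞}

theorem pi_le_hausdorffDist_le_coveringNumber_mul {δ : ℝ≥0} (hK : ∀ᵐ x ∂P, x ∈ K) (hε : 0 < ε)
    (hcov : coveringNumber δ K ≠ ⊤) (hp : ∀ x ∈ K, P (ball x ε)ᶜ ≤ p) :
    (Measure.pi fun _ : ι => P) {X | δ + ε ≤ hausdorffDist K (Set.range X)} ≤
      coveringNumber δ K * p ^ Fintype.card ι := by
  obtain ⟨N, hNK, hNfin, hN, hcard⟩ := exists_set_encard_eq_coveringNumber hcov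
  lift N to Finset E using hNfin
  have hmissed : ∀ᵐ X ∂(Measure.pi fun _ : ι => P), δ + ε ≤ hausdorffDist K (Set.range X) →
      X ∈ ⋃ y ∈ N, {X : ι → E | ∀ i, X i ∉ ball y ε} := by
    filter_upwards [ae_pi_forall_mem hK] with X hXK hle
    contrapose! hle
    refine hausdorffDist_lt_of_isCover hε N.finite_toSet hN (Set.range_subset_iff.2 hXK) ?_
    simpa [dist_comm] using hle
  calc (Measure.pi fun _ : ι => P) {X | δ + ε ≤ hausdorffDist K (Set.range X)}
      ≤ (Measure.pi fun _ : ι => P) (⋃ y ∈ N, {X | ∀ i, X i ∉ ball y ε}) :=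
        measure_mono_ae hmissed
    _ ≤ ∑ y ∈ N, (Measure.pi fun _ : ι => P) {X | ∀ i, X i ∉ ball y ε} :=
        measure_biUnion_finset_le _ _
    _ ≤ ∑ _y ∈ N, p ^ Fintype.card ι := Finset.sum_le_sum fun y hy => by
        rw [pi_forall_notMem]
        exact pow_le_pow_left' (hp y (hNK hy)) _
    _ = coveringNumber δ K * p ^ Fintype.card ι := by
        rw [Finset.sum_const, nsmul_eq_mul, ← hcard, Set.encard_coe_eq_coe_finsetCard,
          ENat.toENNReal_coe]

theorem pi_le_hausdorffDist_mul_le_pow [OpensMeasurableSpace E] {r : ℝ≥0} {c : ℝ≥0∞}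
    (hK : ∀ᵐ x ∂P, x ∈ K) (hε : 0 < ε) (hc₀ : c ≠ 0) (hc : ∀ x ∈ K, c ≤ P (ball x r))
    (hp : ∀ x ∈ K, P (ball x ε)ᶜ ≤ p) :
    (Measure.pi fun _ : ι => P) {X | 2 * r + ε ≤ hausdorffDist K (Set.range X)} * c ≤
      p ^ Fintype.card ι := by
  have htail := pi_le_hausdorffDist_le_coveringNumber_mul (ι := ι) hK hε
    (coveringNumber_ne_top_of_le_measure_ball hc₀ hc) hp
  calc (Measure.pi fun _ : ι => P) {X | 2 * r + ε ≤ hausdorffDist K (Set.range X)} * c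
      ≤ coveringNumber (2 * r) K * p ^ Fintype.card ι * c := by
        gcongr
        exact_mod_cast htail
    _ = coveringNumber (2 * r) K * c * p ^ Fintype.card ι := mul_right_comm _ _ _
    _ ≤ P Set.univ * p ^ Fintype.card ι := by
        gcongr
        exact coveringNumber_mul_le_measure_univ hc
    _ = p ^ Fintype.card ι := by rw [measure_univ, one_mul]

theorem pi_le_hausdorffDist_mul_le_exp [OpensMeasurableSpace E] {r : ℝ≥0} {q q' : ℝ}
    (hK : ∀ᵐ x ∂P, x ∈ K) (hε : 0 < ε) (hrε : r ≤ ε) (hq₀ : 0 < q)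
    (hq : ∀ x ∈ K, ENNReal.ofReal (min 1 q) ≤ P (ball x r))
    (hq' : ∀ x ∈ K, ENNReal.ofReal (min 1 q') ≤ P (ball x ε)) :
    (Measure.pi fun _ : ι => P) {X | 2 * r + ε ≤ hausdorffDist K (Set.range X)} *
      ENNReal.ofReal q ≤ ENNReal.ofReal (Real.exp (-(q' * Fintype.card ι))) := by
  have hpow : ENNReal.ofReal (Real.exp (-q')) ^ Fintype.card ι =
      ENNReal.ofReal (Real.exp (-(q' * Fintype.card ι))) := by
    rw [← ENNReal.ofReal_pow (Real.exp_nonneg _), ← Real.exp_nat_mul, mul_neg, mul_comm q']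
  rcases le_or_gt q 1 with hq₁ | hq₁
  · rw [← hpow]
    exact pi_le_hausdorffDist_mul_le_pow hK hε (ENNReal.ofReal_pos.2 hq₀).ne'
      (by rwa [min_eq_right hq₁] at hq)
      fun x hx => measure_compl_le_exp_neg measurableSet_ball (hq' x hx)
  -- Every ball of radius `r` about a point of `K` has full mass, so the event is null.
  rw [min_eq_left hq₁.le, ENNReal.ofReal_one] at hq
  suffices hnull : (Measure.pi fun _ : ι => P)
      {X | 2 * r + ε ≤ hausdorffDist K (Set.range X)} = 0 by
    rw [hnull, zero_mul]
    exact zero_le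
  rcases isEmpty_or_nonempty ι with hι | hι
  · -- `hausdorffDist K ∅ = 0` by convention
    have hpos : 0 < 2 * r + ε := by positivity
    simp [Set.range_eq_empty, hausdorffDist_empty, hpos.not_ge]
  · have hfull : ∀ x ∈ K, P (ball x ε)ᶜ ≤ 0 := fun x hx =>
      ((prob_compl_eq_zero_iff measurableSet_ball).2 <|
        prob_le_one.antisymm <| (hq x hx).trans <| measure_mono <| ball_subset_ball hrε).le
    have htail := pi_le_hausdorffDist_mul_le_pow (ι := ι) hK hε one_ne_zero hq hfull
    simpa only [mul_one, zero_pow Fintype.card_ne_zero, nonpos_iff_eq_zero] using htail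

end Sample

theorem hausdorff_tail_bound_general {E ι : Type*} [PseudoMetricSpace E] [MeasurableSpace E]
    [OpensMeasurableSpace E] [Fintype ι] {a b u : ℝ} (ha : 0 < a) (hu : 0 < u)
    {P : Measure E} [IsProbabilityMeasure P] {𝒳 : Set E} (h𝒳 : ∀ᵐ x ∂P, x ∈ 𝒳)
    (hstd : ∀ x ∈ 𝒳, ∀ t : ℝ, 0 < t → ENNReal.ofReal (min 1 (a * t ^ b)) ≤ P (ball x t)) :
    (Measure.pi fun _ : ι => P) {X | u ≤ hausdorffDist 𝒳 (Set.range X)} ≤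
      ENNReal.ofReal
        (min 1 (4 ^ b / (a * u ^ b) * Real.exp (-(a * (u / 2) ^ b * Fintype.card ι)))) := by
  lift u to ℝ≥0 using hu.le
  have hmass : 0 < a * ((u : ℝ) / 4) ^ b := by positivity
  have hfactor : (4 : ℝ) ^ b / (a * u ^ b) = (a * ((u : ℝ) / 4) ^ b)⁻¹ := by
    rw [Real.div_rpow hu.le (by norm_num), mul_div_assoc', inv_div]
  have hradii : 2 * ((u / 4 : ℝ≥0) : ℝ) + u / 2 = u := by
    push_cast
    ring
  have htail := pi_le_hausdorffDist_mul_le_exp (ι := ι) (r := u / 4) h𝒳 (half_pos hu)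
    (by push_cast; linarith) hmass (fun x hx => hstd x hx _ (by positivity))
    fun x hx => hstd x hx _ (half_pos hu)
  rw [hradii, ← ENNReal.le_div_iff_mul_le (by simp [hmass]) (by simp),
    ← ENNReal.ofReal_div_of_pos hmass, div_eq_inv_mul, ← hfactor] at htail
  rw [ENNReal.ofReal_min, ENNReal.ofReal_one]
  exact le_min prob_le_one htail

/-- For an `(a,b)`-standard probability measure `P` on `ℝ^D` with compact
support `𝒳`, and `X_1, …, X_n` i.i.d. from `P`, for every `u > 0`,
`P(d_H(𝒳, {X_1,…,X_n}) ≥ u) ≤ min {1, (4^b / (a u^b)) · exp(−a (u/2)^b n)}`. -/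
theorem hausdorff_tail_bound {D : ℕ} (a b : ℝ) (ha : 0 < a) (hb : 1 ≤ b)
    (P : Measure (EuclideanSpace ℝ (Fin D))) [IsProbabilityMeasure P]
    (𝒳 : Set (EuclideanSpace ℝ (Fin D))) (h𝒳c : IsCompact 𝒳) (h𝒳ne : 𝒳.Nonempty)
    (hP𝒳 : P 𝒳 = 1)
    (hstd : ∀ x ∈ 𝒳, ∀ t : ℝ, 0 < t →
      ENNReal.ofReal (min 1 (a * t ^ b)) ≤ P (ball x t))
    (n : ℕ) (u : ℝ) (hu : 0 < u) :
    (Measure.pi fun _ : Fin n => P) {X | u ≤ hausdorffDist 𝒳 (Set.range X)} ≤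
      ENNReal.ofReal
        (min 1 (4 ^ b / (a * u ^ b) * Real.exp (-(a * (u / 2) ^ b * n)))) := by
  simpa only [Fintype.card_fin] using hausdorff_tail_bound_general (ι := Fin n) ha hu
    ((mem_ae_iff_prob_eq_one h𝒳c.measurableSet).2 hP𝒳) hstd
end

section
/- Let a > 0 and b ≥ 1, let P be an (a,b)-standard probability measure on ℝ^D with compact support 𝒳, let n ≥ 2, and set δ_n = 8 (2 log(n) / (a n))^{1/b}. If X_1, …, X_n are independent random points drawn from P, then P(d_H(𝒳, {X_1, …, X_n}) > δ_n / 4) ≤ min{1, 2^b / (2 n log(n))}. -/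
open MeasureTheory Metric

open Set
open scoped NNReal ENNReal

/-!
Cover the support by balls of radius `s` centred at points of the support. If every ball of the
cover contains a sample point, then the sample is within Hausdorff distance `2 * s` of the
support, so a union bound over the cover estimates the probability of a larger distance. The size
of the cover is bounded by packing: balls of radius `s / 2` around an `s`-separated set are
disjoint, and each has mass at least `min 1 (a * (s / 2) ^ b)`. The scale `s = δ / 8` is chosen so
that `a * s ^ b = 2 * log n / n`, and then each ball is missed with probability at most `1 / n ^ 2`.
-/

section Covering

variable {E : Type*} [PseudoEMetricSpace E] [MeasurableSpace E] [OpensMeasurableSpace E]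
  {μ : Measure E} {A : Set E} {q : ℝ≥0∞}

lemma encard_mul_le_measure_univ_of_isSeparated_s1 {ε : ℝ≥0∞} (hA : IsSeparated ε A)
    (hq : ∀ x ∈ A, q ≤ μ (eball x (ε / 2))) : (A.encard : ℝ≥0∞) * q ≤ μ univ := by
  have hdisj : Pairwise (Function.onFun Disjoint fun x : A ↦ eball (x : E) (ε / 2)) := by
    intro x y hxy
    refine eball_disjoint ?_
    rw [ENNReal.add_halves]
    exact (hA x.2 y.2 (Subtype.coe_ne_coe.mpr hxy)).le
  calc (A.encard : ℝ≥0∞) * q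
      = ∑' _ : A, q := (ENNReal.tsum_const q).symm
    _ ≤ ∑' x : A, μ (eball (x : E) (ε / 2)) := ENNReal.tsum_le_tsum fun x ↦ hq x x.2
    _ ≤ μ univ := tsum_measure_le_measure_univ
        (fun _ ↦ isOpen_eball.measurableSet.nullMeasurableSet) hdisj.aedisjoint

lemma coveringNumber_mul_le_measure_univ_s1 {ε : ℝ≥0} (hq : ∀ x ∈ A, q ≤ μ (eball x (ε / 2))) :
    (coveringNumber ε A : ℝ≥0∞) * q ≤ μ univ := by
  have hpack : (packingNumber ε A : ℝ≥0∞) * q ≤ μ univ := by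
    simp only [packingNumber, ENat.toENNReal_iSup, ENNReal.iSup_mul, iSup_le_iff]
    exact fun C hCA hC ↦ encard_mul_le_measure_univ_of_isSeparated_s1 hC fun x hx ↦ hq x (hCA hx)
  exact le_trans (by gcongr; exact coveringNumber_le_packingNumber ε A) hpack

end Covering

section Sampling

variable {E ι : Type*} [PseudoMetricSpace E] {A N : Set E} {r t : ℝ≥0}

lemma hausdorffDist_range_le_of_isCover {X : ι → E} (hN : IsCover r A N) (hXA : ∀ i, X i ∈ A)
    (hXN : ∀ z ∈ N, ∃ i, X i ∈ ball z t) : hausdorffDist A (range X) ≤ r + t := by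
  refine hausdorffDist_le_of_mem_dist (by positivity) (fun x hx ↦ ?_) ?_
  · obtain ⟨z, hzN, hxz⟩ := mem_iUnion₂.mp (hN.subset_iUnion_closedBall hx)
    obtain ⟨i, hi⟩ := hXN z hzN
    exact ⟨X i, mem_range_self i,
      (dist_triangle_right x (X i) z).trans (add_le_add hxz (mem_ball.mp hi).le)⟩
  · rintro _ ⟨i, rfl⟩
    exact ⟨X i, hXA i, by rw [dist_self]; positivity⟩

variable [Fintype ι] [MeasurableSpace E] {μ : Measure E} [SigmaFinite μ]

lemma measure_pi_hausdorffDist_gt_le_coveringNumber_mul (hA : ∀ᵐ x ∂μ, x ∈ A)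
    (hcov : coveringNumber r A ≠ ⊤) {c : ℝ≥0∞} (hc : ∀ z ∈ A, μ (ball z t)ᶜ ≤ c) :
    (Measure.pi fun _ : ι ↦ μ) {X | r + t < hausdorffDist A (range X)} ≤
      coveringNumber r A * c ^ Fintype.card ι := by
  set N := minimalCover r A
  have hmem : ∀ᵐ X ∂Measure.pi fun _ : ι ↦ μ, ∀ i, X i ∈ A :=
    ae_all_iff.mpr fun _ ↦ Measure.tendsto_eval_ae_ae.eventually hA
  have hmissed : ({X | r + t < hausdorffDist A (range X)} : Set (ι → E))
      ≤ᵐ[Measure.pi fun _ ↦ μ] ⋃ z ∈ N, univ.pi fun _ ↦ (ball z t)ᶜ := by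
    filter_upwards [hmem] with X hXA hX
    by_contra (hhit : X ∉ ⋃ z ∈ N, univ.pi fun _ ↦ (ball z t)ᶜ)
    simp only [mem_iUnion, mem_univ_pi, mem_compl_iff, not_exists, not_forall, not_not] at hhit
    exact not_le.mpr hX (hausdorffDist_range_le_of_isCover (isCover_minimalCover hcov) hXA hhit)
  calc (Measure.pi fun _ : ι ↦ μ) {X | r + t < hausdorffDist A (range X)}
      ≤ (Measure.pi fun _ : ι ↦ μ) (⋃ z ∈ N, univ.pi fun _ ↦ (ball z t)ᶜ) :=
        measure_mono_ae hmissed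
    _ ≤ ∑' z : N, (Measure.pi fun _ : ι ↦ μ) (univ.pi fun _ ↦ (ball (z : E) t)ᶜ) :=
        measure_biUnion_le _ finite_minimalCover.countable _
    _ ≤ ∑' _ : N, c ^ Fintype.card ι := by
        refine ENNReal.tsum_le_tsum fun z ↦ ?_
        rw [Measure.pi_pi, Finset.prod_const, Finset.card_univ]
        gcongr
        exact hc z (minimalCover_subset z.2)
    _ = coveringNumber r A * c ^ Fintype.card ι := by
        rw [ENNReal.tsum_const, ← encard_minimalCover hcov]
        rfl

end Sampling

section Standard

variable {E : Type*} [PseudoMetricSpace E] [MeasurableSpace E]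

/-- The measure `P` is `(a, b)`-standard on the set `A`: balls centred in `A` have at least the mass
`min 1 (a * t ^ b)`, as used to bound covering numbers and sampling errors. The set `A` plays the
role of the support; that it is compact or of full measure is not part of the definition. -/
def IsStandardOn (P : Measure E) (A : Set E) (a b : ℝ) : Prop :=
  ∀ x ∈ A, ∀ t : ℝ, 0 < t → ENNReal.ofReal (min 1 (a * t ^ b)) ≤ P (ball x t)

namespace IsStandardOn

variable [OpensMeasurableSpace E] {P : Measure E} [IsProbabilityMeasure P] {A : Set E}
  {a b s : ℝ}

lemma measure_compl_ball_le_exp (hP : IsStandardOn P A a b) {x : E} (hx : x ∈ A) (hs : 0 < s) :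
    P (ball x s)ᶜ ≤ ENNReal.ofReal (Real.exp (-(a * s ^ b))) := by
  have hexp : 1 ≤ Real.exp (-(a * s ^ b)) + min 1 (a * s ^ b) := by
    rcases min_cases 1 (a * s ^ b) with ⟨hmin, -⟩ | ⟨hmin, -⟩ <;> rw [hmin]
    · exact le_add_of_nonneg_left (Real.exp_nonneg _)
    · linarith [Real.one_sub_le_exp_neg (a * s ^ b)]
  rw [prob_compl_eq_one_sub measurableSet_ball, tsub_le_iff_right]
  calc (1 : ℝ≥0∞)
      ≤ ENNReal.ofReal (Real.exp (-(a * s ^ b)) + min 1 (a * s ^ b)) :=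
        ENNReal.one_le_ofReal.mpr hexp
    _ ≤ ENNReal.ofReal (Real.exp (-(a * s ^ b))) + ENNReal.ofReal (min 1 (a * s ^ b)) :=
        ENNReal.ofReal_add_le
    _ ≤ ENNReal.ofReal (Real.exp (-(a * s ^ b))) + P (ball x s) := by
        gcongr
        exact hP x hx s hs

lemma coveringNumber_le (hP : IsStandardOn P A a b) (ha : 0 < a) (hs : 0 < s) :
    (coveringNumber s.toNNReal A : ℝ≥0∞) ≤ ENNReal.ofReal (1 / min 1 (a * (s / 2) ^ b)) := by
  have hmin : 0 < min 1 (a * (s / 2) ^ b) := by positivity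
  rw [ENNReal.ofReal_div_of_pos hmin, ENNReal.ofReal_one,
    ENNReal.le_div_iff_mul_le (.inr one_ne_zero) (.inr ENNReal.one_ne_top)]
  refine (coveringNumber_mul_le_measure_univ_s1 (μ := P) fun x hx ↦ ?_).trans_eq measure_univ
  have hball : eball x ((s.toNNReal : ℝ≥0∞) / 2) = ball x (s / 2) := by
    rw [← eball_ofReal, ENNReal.ofReal_div_of_pos two_pos, ENNReal.ofReal_ofNat]
    rfl
  exact hball ▸ hP x hx (s / 2) (by positivity)

theorem measure_pi_hausdorffDist_gt_le {ι : Type*} [Fintype ι] (hP : IsStandardOn P A a b)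
    (hA : ∀ᵐ x ∂P, x ∈ A) (ha : 0 < a) (hs : 0 < s) :
    (Measure.pi fun _ : ι ↦ P) {X | 2 * s < hausdorffDist A (range X)} ≤
      ENNReal.ofReal (Real.exp (-(Fintype.card ι * (a * s ^ b))) / min 1 (a * (s / 2) ^ b)) := by
  have hcov := hP.coveringNumber_le ha hs
  have hfin : coveringNumber s.toNNReal A ≠ ⊤ :=
    ENat.toENNReal_ne_top.mp (ne_top_of_le_ne_top ENNReal.ofReal_ne_top hcov)
  have hunion := measure_pi_hausdorffDist_gt_le_coveringNumber_mul (ι := ι) (t := s.toNNReal) hA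
    hfin fun z hz ↦ by
      rw [Real.coe_toNNReal s hs.le]
      exact hP.measure_compl_ball_le_exp hz hs
  rw [Real.coe_toNNReal s hs.le, ← two_mul] at hunion
  calc (Measure.pi fun _ : ι ↦ P) {X | 2 * s < hausdorffDist A (range X)}
      ≤ coveringNumber s.toNNReal A *
        ENNReal.ofReal (Real.exp (-(a * s ^ b))) ^ Fintype.card ι := hunion
    _ ≤ ENNReal.ofReal (1 / min 1 (a * (s / 2) ^ b)) *
        ENNReal.ofReal (Real.exp (-(a * s ^ b))) ^ Fintype.card ι := by gcongr
    _ = ENNReal.ofReal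
        (Real.exp (-(Fintype.card ι * (a * s ^ b))) / min 1 (a * (s / 2) ^ b)) := by
        rw [← ENNReal.ofReal_pow (Real.exp_nonneg _), ← Real.exp_nat_mul, mul_neg,
          ← ENNReal.ofReal_mul (by positivity), one_div_mul_eq_div]

end IsStandardOn

end Standard

lemma two_mul_log_le_self {x : ℝ} (hx : 0 < x) : 2 * Real.log x ≤ x := by
  have hhalf := Real.log_le_sub_one_of_pos (half_pos hx)
  rw [Real.log_div hx.ne' two_ne_zero] at hhalf
  linarith [Real.log_two_lt_d9]

lemma exp_neg_two_mul_log {x : ℝ} (hx : 0 < x) : Real.exp (-(2 * Real.log x)) = 1 / x ^ 2 := by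
  rw [Real.exp_neg, mul_comm, Real.exp_mul, Real.exp_log hx, Real.rpow_two, one_div]

theorem hausdorff_tail_bound_deltaN_general {E : Type*} [PseudoMetricSpace E] [MeasurableSpace E]
    [OpensMeasurableSpace E] {a b : ℝ} (ha : 0 < a) (hb : 0 < b) {P : Measure E}
    [IsProbabilityMeasure P] {A : Set E} (hA : ∀ᵐ x ∂P, x ∈ A) (hP : IsStandardOn P A a b)
    {n : ℕ} (hn : 2 ≤ n) {δ : ℝ} (hδ : δ = 8 * (2 * Real.log n / (a * n)) ^ (1 / b)) :
    (Measure.pi fun _ : Fin n ↦ P) {X | δ / 4 < hausdorffDist A (range X)} ≤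
      ENNReal.ofReal (min 1 (2 ^ b / (2 * n * Real.log n))) := by
  have hn0 : (0 : ℝ) < n := by positivity
  have hlog : 0 < Real.log n := Real.log_pos (by exact_mod_cast hn)
  set s := (2 * Real.log n / (a * n)) ^ (1 / b) with hs
  have hs0 : 0 < s := by positivity
  have hball : a * s ^ b = 2 * Real.log n / n := by
    rw [hs, one_div, Real.rpow_inv_rpow (by positivity) hb.ne']
    field_simp
  have hhalf : a * (s / 2) ^ b = 2 * Real.log n / n / 2 ^ b := by
    rw [Real.div_rpow hs0.le zero_le_two, ← hball, mul_div_assoc]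
  have hhalf_le : 2 * Real.log n / n / 2 ^ b ≤ 1 :=
    div_le_one_of_le₀ (((div_le_one hn0).mpr (two_mul_log_le_self hn0)).trans
      (Real.one_le_rpow one_le_two hb.le)) (by positivity)
  have htail := hP.measure_pi_hausdorffDist_gt_le (ι := Fin n) hA ha hs0
  rw [Fintype.card_fin, hball, hhalf, min_eq_right hhalf_le, mul_div_cancel₀ _ hn0.ne',
    exp_neg_two_mul_log hn0] at htail
  rw [ENNReal.ofReal_min, ENNReal.ofReal_one, show δ / 4 = 2 * s by rw [hδ]; ring]
  refine le_min prob_le_one (htail.trans_eq (congrArg ENNReal.ofReal ?_))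
  field_simp

/-- For an `(a,b)`-standard probability measure `P` on `ℝ^D` with compact
support `𝒳`, `n ≥ 2`, and `δ_n = 8 (2 log n / (a n))^{1/b}`, if `X_1, …, X_n` are i.i.d.
from `P`, then `P(d_H(𝒳, {X_1,…,X_n}) > δ_n / 4) ≤ min {1, 2^b / (2 n log n)}`. -/
theorem hausdorff_tail_bound_deltaN {D : ℕ} (a b : ℝ) (ha : 0 < a) (hb : 1 ≤ b)
    (P : Measure (EuclideanSpace ℝ (Fin D))) [IsProbabilityMeasure P]
    (𝒳 : Set (EuclideanSpace ℝ (Fin D))) (h𝒳c : IsCompact 𝒳) (h𝒳ne : 𝒳.Nonempty)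
    (hP𝒳 : P 𝒳 = 1)
    (hstd : ∀ x ∈ 𝒳, ∀ t : ℝ, 0 < t →
      ENNReal.ofReal (min 1 (a * t ^ b)) ≤ P (ball x t))
    (n : ℕ) (hn : 2 ≤ n)
    (δ : ℝ) (hδ : δ = 8 * (2 * Real.log n / (a * n)) ^ (1 / b : ℝ)) :
    (Measure.pi fun _ : Fin n => P) {X | δ / 4 < hausdorffDist 𝒳 (Set.range X)} ≤
      ENNReal.ofReal (min 1 (2 ^ b / (2 * n * Real.log n))) := by
  exact hausdorff_tail_bound_deltaN_general ha (zero_lt_one.trans_le hb)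
    ((mem_ae_iff_prob_eq_one h𝒳c.measurableSet).mpr hP𝒳) hstd hn hδ
end

section
/- Let P be a probability measure on ℝ^D with compact support 𝒳, let u > 0, and suppose there exist points c_1, …, c_N ∈ ℝ^D and a number p ∈ (0,1] such that 𝒳 ⊆ ∪_{i=1}^N B(c_i, u/2) and P(B(c_i, u/2)) ≥ p for every i. If X_1, …, X_n are independent random points drawn from P, then P(d_H(𝒳, {X_1, …, X_n}) ≥ u) ≤ N (1 − p)^n. -/
open MeasureTheory Metric

/-! If every ball of the cover contains a sample point then every point of `𝒳` is within `u` of the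
sample, and since `𝒳` is compact the farthest distance is attained, hence still less than `u`. So
`d_H ≥ u` forces the whole sample to miss one of the `N` balls, which has probability at most
`(1 - p) ^ n` for each ball by independence; a union bound concludes. -/

section HausdorffDistance

variable {α : Type*} [PseudoMetricSpace α] {s t : Set α} {u : ℝ}

theorem hausdorffDist_lt_of_infDist_lt_of_subset (hs : IsCompact s) (hs_nonempty : s.Nonempty)
    (hts : t ⊆ s) (hu : ∀ x ∈ s, infDist x t < u) : hausdorffDist s t < u := by
  obtain ⟨x₀, hx₀, hmax⟩ := hs.exists_isMaxOn hs_nonempty (continuous_infDist_pt t).continuousOn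
  calc
    hausdorffDist s t ≤ infDist x₀ t :=
      hausdorffDist_le_of_infDist infDist_nonneg (fun _ hx => hmax hx) fun y hy =>
        (infDist_zero_of_mem (hts hy)).trans_le infDist_nonneg
    _ < u := hu x₀ hx₀

theorem infDist_lt_of_mem_of_mem_ball_half {x y c : α} (hyt : y ∈ t) (hx : x ∈ ball c (u / 2))
    (hy : y ∈ ball c (u / 2)) : infDist x t < u :=
  calc
    infDist x t ≤ dist x y := infDist_le_dist_of_mem hyt
    _ ≤ dist x c + dist y c := dist_triangle_right x y c
    _ < u / 2 + u / 2 := add_lt_add hx hy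
    _ = u := add_halves u

theorem hausdorffDist_lt_of_subset_iUnion_ball {ι : Sort*} {c : ι → α} (hs : IsCompact s)
    (hs_nonempty : s.Nonempty) (hts : t ⊆ s) (hcov : s ⊆ ⋃ i, ball (c i) (u / 2))
    (hhit : ∀ i, ∃ y ∈ t, y ∈ ball (c i) (u / 2)) : hausdorffDist s t < u := by
  refine hausdorffDist_lt_of_infDist_lt_of_subset hs hs_nonempty hts fun x hx => ?_
  obtain ⟨i, hi⟩ := Set.mem_iUnion.1 (hcov hx)
  obtain ⟨y, hyt, hy⟩ := hhit i
  exact infDist_lt_of_mem_of_mem_ball_half hyt hi hy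

end HausdorffDistance

section IIDSample

variable {α ι κ : Type*} [MeasurableSpace α] [Fintype ι] [Fintype κ] {P : Measure α}

theorem measurePi_setOf_forall_notMem [SigmaFinite P] (A : Set α) :
    (Measure.pi fun _ : κ => P) {X | ∀ j, X j ∉ A} = P Aᶜ ^ Fintype.card κ := by
  have missing_eq_pi : {X : κ → α | ∀ j, X j ∉ A} = Set.univ.pi fun _ => Aᶜ := by
    ext X
    simp
  rw [missing_eq_pi, Measure.pi_pi, Finset.prod_const, Finset.card_univ]

theorem measurePi_real_setOf_forall_notMem_le [IsProbabilityMeasure P] {A : Set α}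
    (hA : MeasurableSet A) {p : ℝ} (hp : p ≤ P.real A) :
    (Measure.pi fun _ : κ => P).real {X | ∀ j, X j ∉ A} ≤ (1 - p) ^ Fintype.card κ :=
  calc
    (Measure.pi fun _ : κ => P).real {X | ∀ j, X j ∉ A} = P.real Aᶜ ^ Fintype.card κ := by
      simp only [measureReal_def, measurePi_setOf_forall_notMem, ENNReal.toReal_pow]
    _ = (1 - P.real A) ^ Fintype.card κ := by rw [probReal_compl_eq_one_sub hA]
    _ ≤ (1 - p) ^ Fintype.card κ :=
      pow_le_pow_left₀ (sub_nonneg.2 measureReal_le_one) (sub_le_sub_left hp 1) _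

theorem measurePi_real_setOf_exists_forall_notMem_le [IsProbabilityMeasure P] {A : ι → Set α}
    (hA : ∀ i, MeasurableSet (A i)) {p : ℝ} (hp : ∀ i, p ≤ P.real (A i)) :
    (Measure.pi fun _ : κ => P).real {X | ∃ i, ∀ j, X j ∉ A i} ≤
      Fintype.card ι * (1 - p) ^ Fintype.card κ :=
  calc
    (Measure.pi fun _ : κ => P).real {X | ∃ i, ∀ j, X j ∉ A i}
      ≤ ∑ i, (Measure.pi fun _ : κ => P).real {X | ∀ j, X j ∉ A i} := by
      rw [Set.ofPred_exists]
      exact measureReal_iUnion_fintype_le _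
    _ ≤ ∑ _ : ι, (1 - p) ^ Fintype.card κ :=
      Finset.sum_le_sum fun i _ => measurePi_real_setOf_forall_notMem_le (hA i) (hp i)
    _ = Fintype.card ι * (1 - p) ^ Fintype.card κ := by
      rw [Finset.sum_const, Finset.card_univ, nsmul_eq_mul]

end IIDSample

theorem hausdorff_covering_bound_general {α ι κ : Type*} [PseudoMetricSpace α] [MeasurableSpace α]
    [OpensMeasurableSpace α] [Fintype ι] [Fintype κ] {P : Measure α} [IsProbabilityMeasure P]
    {𝒳 : Set α} (h𝒳 : IsCompact 𝒳) (hP𝒳 : ∀ᵐ x ∂P, x ∈ 𝒳) {u : ℝ} {c : ι → α} {p : ℝ}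
    (hcov : 𝒳 ⊆ ⋃ i, ball (c i) (u / 2)) (hmass : ∀ i, ENNReal.ofReal p ≤ P (ball (c i) (u / 2))) :
    (Measure.pi fun _ : κ => P) {X | u ≤ hausdorffDist 𝒳 (Set.range X)} ≤
      ENNReal.ofReal (Fintype.card ι * (1 - p) ^ Fintype.card κ) := by
  have sample_mem : ∀ᵐ X ∂(Measure.pi fun _ : κ => P), ∀ j, X j ∈ 𝒳 :=
    Filter.eventually_all.2 fun _ => Measure.tendsto_eval_ae_ae.eventually hP𝒳
  have missed_ball_of_far : {X | u ≤ hausdorffDist 𝒳 (Set.range X)} ≤ᵐ[Measure.pi fun _ : κ => P]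
      {X | ∃ i, ∀ j, X j ∉ ball (c i) (u / 2)} := by
    filter_upwards [sample_mem] with X hX (hfar : u ≤ hausdorffDist 𝒳 (Set.range X))
    change ∃ i, ∀ j, X j ∉ ball (c i) (u / 2)
    contrapose! hfar with hhit
    exact hausdorffDist_lt_of_subset_iUnion_ball h𝒳 hP𝒳.exists (Set.range_subset_iff.2 hX) hcov
      fun i => Set.exists_range_iff.2 (hhit i)
  have hmass_real : ∀ i, p ≤ P.real (ball (c i) (u / 2)) := fun i =>
    (ENNReal.ofReal_le_iff_le_toReal (measure_ne_top P _)).1 (hmass i)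
  calc
    (Measure.pi fun _ : κ => P) {X | u ≤ hausdorffDist 𝒳 (Set.range X)}
      ≤ (Measure.pi fun _ : κ => P) {X | ∃ i, ∀ j, X j ∉ ball (c i) (u / 2)} :=
      measure_mono_ae missed_ball_of_far
    _ = ENNReal.ofReal ((Measure.pi fun _ : κ => P).real
          {X | ∃ i, ∀ j, X j ∉ ball (c i) (u / 2)}) := (ofReal_measureReal).symm
    _ ≤ ENNReal.ofReal (Fintype.card ι * (1 - p) ^ Fintype.card κ) :=
      ENNReal.ofReal_le_ofReal <|
        measurePi_real_setOf_exists_forall_notMem_le (fun _ => measurableSet_ball) hmass_real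

/-- Let `P` be a probability measure on `ℝ^D` with compact support `𝒳`,
`u > 0`, and suppose `c_1, …, c_N ∈ ℝ^D` and `p ∈ (0,1]` are such that
`𝒳 ⊆ ∪ᵢ B(cᵢ, u/2)` and `P(B(cᵢ, u/2)) ≥ p` for every `i`. If `X_1, …, X_n` are i.i.d.
from `P`, then `P(d_H(𝒳, {X_1,…,X_n}) ≥ u) ≤ N (1 − p)^n`. -/
theorem hausdorff_covering_bound {D N : ℕ}
    (P : Measure (EuclideanSpace ℝ (Fin D))) [IsProbabilityMeasure P]
    (𝒳 : Set (EuclideanSpace ℝ (Fin D))) (h𝒳c : IsCompact 𝒳) (h𝒳ne : 𝒳.Nonempty)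
    (hP𝒳 : P 𝒳 = 1)
    (hsupp : ∀ x ∈ 𝒳, ∀ r : ℝ, 0 < r → 0 < P (ball x r))
    (u : ℝ) (hu : 0 < u)
    (c : Fin N → EuclideanSpace ℝ (Fin D)) (p : ℝ) (hp0 : 0 < p) (hp1 : p ≤ 1)
    (hcov : 𝒳 ⊆ ⋃ i, ball (c i) (u / 2))
    (hmass : ∀ i, ENNReal.ofReal p ≤ P (ball (c i) (u / 2)))
    (n : ℕ) :
    (Measure.pi fun _ : Fin n => P) {X | u ≤ hausdorffDist 𝒳 (Set.range X)} ≤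
      ENNReal.ofReal (N * (1 - p) ^ n) := by
  simpa only [Fintype.card_fin] using hausdorff_covering_bound_general (κ := Fin n) h𝒳c
    ((mem_ae_iff_prob_eq_one h𝒳c.measurableSet).2 hP𝒳) hcov hmass
end

section
/- (Le Cam's Lemma.) Let (E, ℰ) be a measurable space, let P₀ and P₁ be two probability measures on (E, ℰ), let (M, ρ) be a pseudometric space, let θ₀, θ₁ ∈ M, and let θ̂ : Eⁿ → M be a measurable map (an estimator based on n observations) such that x ↦ ρ(θ_i, θ̂(x)) is measurable for i = 0, 1. Then max{ E_{P₀ⁿ}[ρ(θ₀, θ̂)], E_{P₁ⁿ}[ρ(θ₁, θ̂)] } ≥ (1/8) · ρ(θ₀, θ₁) · (1 − TV(P₀, P₁))^{2n}, where TV(P₀, P₁) = sup_{B ∈ ℰ} |P₀(B) − P₁(B)| is the total variation distance. In particular, the supremum over {P₀, P₁} of the expected risk E_{Pⁿ}[ρ(θ(P), θ̂)] is bounded below by (1/8) ρ(θ₀, θ₁)(1 − TV(P₀, P₁))^{2n}. -/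
open MeasureTheory Metric

/-!
If `ν` is a common minorant of the laws `μ₀`, `μ₁` of the data, then integrating the triangle
inequality `ρ(θ₀, θ₁) ≤ ρ(θ₀, θ̂) + ρ(θ₁, θ̂)` against `ν` bounds the sum of the two risks below by
`ρ(θ₀, θ₁) ν(univ)`. The largest minorant `P₀ ⊓ P₁` of two probability measures has mass at least
`1 - TV(P₀, P₁)`, and the product of the coordinatewise minorants is a minorant of the product
measures, so its mass is at least the product of the factors `1 - TV`. This gives the constant `1/2`
and the exponent `n`, which are better than `1/8` and `2n`.
-/

/-- The total variation distance `sup_B |P(B) - Q(B)|`, the supremum running over the measurable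
sets. For finite measures the family is bounded, so that the real supremum is a genuine one. -/
noncomputable def tvDist {E : Type*} [MeasurableSpace E] (P Q : Measure E) : ℝ :=
  ⨆ B : {B : Set E // MeasurableSet B}, |P.real B.1 - Q.real B.1|

section TotalVariation

variable {E : Type*} [MeasurableSpace E] (P Q : Measure E)

lemma tvDist_nonneg : 0 ≤ tvDist P Q :=
  Real.iSup_nonneg fun _ => abs_nonneg _

lemma abs_measureReal_sub_le_max [IsFiniteMeasure P] [IsFiniteMeasure Q] (B : Set E) :
    |P.real B - Q.real B| ≤ max (P.real Set.univ) (Q.real Set.univ) :=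
  abs_sub_le_of_nonneg_of_le
    measureReal_nonneg (le_max_of_le_left (measureReal_mono B.subset_univ))
    measureReal_nonneg (le_max_of_le_right (measureReal_mono B.subset_univ))

lemma tvDist_le_one [IsProbabilityMeasure P] [IsProbabilityMeasure Q] : tvDist P Q ≤ 1 :=
  Real.iSup_le (fun B => by simpa using abs_measureReal_sub_le_max P Q B.1) zero_le_one

lemma abs_measureReal_sub_le_tvDist [IsFiniteMeasure P] [IsFiniteMeasure Q] {B : Set E}
    (hB : MeasurableSet B) : |P.real B - Q.real B| ≤ tvDist P Q :=
  le_ciSup (f := fun B : {B : Set E // MeasurableSet B} => |P.real B.1 - Q.real B.1|)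
    ⟨_, Set.forall_mem_range.2 fun B => abs_measureReal_sub_le_max P Q B.1⟩ ⟨B, hB⟩

lemma ofReal_sub_tvDist_le_add_compl [IsFiniteMeasure P] [IsFiniteMeasure Q] {B : Set E}
    (hB : MeasurableSet B) :
    ENNReal.ofReal (Q.real Set.univ - tvDist P Q) ≤ P B + Q Bᶜ := by
  have h_tv : -tvDist P Q ≤ P.real B - Q.real B :=
    neg_le_of_abs_le (abs_measureReal_sub_le_tvDist P Q hB)
  rw [← ofReal_measureReal (μ := P), ← ofReal_measureReal (μ := Q),
    ← ENNReal.ofReal_add measureReal_nonneg measureReal_nonneg, measureReal_compl hB]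
  exact ENNReal.ofReal_le_ofReal (by linarith)

lemma ofReal_sub_tvDist_le_inf_univ [IsFiniteMeasure P] [IsFiniteMeasure Q] :
    ENNReal.ofReal (Q.real Set.univ - tvDist P Q) ≤ (P ⊓ Q) Set.univ := by
  rw [Measure.inf_apply MeasurableSet.univ]
  -- The infimum runs over all sets `t`, measurable or not, hence the measurable hull below.
  refine le_sInf ?_
  rintro _ ⟨t, rfl⟩
  simp only [Set.inter_univ]
  calc ENNReal.ofReal (Q.real Set.univ - tvDist P Q)
      ≤ P (toMeasurable P t) + Q (toMeasurable P t)ᶜ :=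
        ofReal_sub_tvDist_le_add_compl P Q (measurableSet_toMeasurable P t)
    _ ≤ P t + Q tᶜ := by
        rw [measure_toMeasurable]
        gcongr
        exact subset_toMeasurable P t

end TotalVariation

section Product

variable {ι : Type*} [Fintype ι] {E : ι → Type*}

lemma outerMeasure_pi_mono {m m' : ∀ i, OuterMeasure (E i)} (h : ∀ i, m i ≤ m' i) :
    OuterMeasure.pi m ≤ OuterMeasure.pi m' :=
  OuterMeasure.le_pi.2 fun s _ =>
    (OuterMeasure.pi_pi_le m s).trans (Finset.prod_le_prod' fun i _ => h i (s i))

variable [∀ i, MeasurableSpace (E i)]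

lemma measure_pi_mono {μ ν : ∀ i, Measure (E i)} (h : ∀ i, μ i ≤ ν i) :
    Measure.pi μ ≤ Measure.pi ν := by
  refine Measure.le_iff.2 fun s hs => ?_
  rw [Measure.pi, Measure.pi, toMeasure_apply _ _ hs, toMeasure_apply _ _ hs]
  exact outerMeasure_pi_mono h s

lemma prod_inf_univ_le_pi_inf_pi_univ (P Q : ∀ i, Measure (E i)) [∀ i, SigmaFinite (P i)] :
    ∏ i, (P i ⊓ Q i) Set.univ ≤ (Measure.pi P ⊓ Measure.pi Q) Set.univ := by
  have (i : ι) : SigmaFinite (P i ⊓ Q i) := Measure.sigmaFinite_of_le (P i) inf_le_left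
  rw [← Measure.pi_univ]
  exact le_inf (measure_pi_mono fun _ => inf_le_left) (measure_pi_mono fun _ => inf_le_right) _

lemma prod_ofReal_one_sub_tvDist_le (P Q : ∀ i, Measure (E i))
    [∀ i, IsProbabilityMeasure (P i)] [∀ i, IsProbabilityMeasure (Q i)] :
    ∏ i, ENNReal.ofReal (1 - tvDist (P i) (Q i)) ≤ (Measure.pi P ⊓ Measure.pi Q) Set.univ :=
  (Finset.prod_le_prod' fun i _ => by
    simpa using ofReal_sub_tvDist_le_inf_univ (P i) (Q i)).trans
      (prod_inf_univ_le_pi_inf_pi_univ P Q)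

end Product

lemma edist_mul_inf_univ_le_lintegral_add {Ω : Type*} [MeasurableSpace Ω] {μ₀ μ₁ : Measure Ω}
    {M : Type*} [PseudoEMetricSpace M] (θ₀ θ₁ : M) {est : Ω → M}
    (h_meas : AEMeasurable (fun x => edist θ₀ (est x)) μ₀) :
    edist θ₀ θ₁ * (μ₀ ⊓ μ₁) Set.univ ≤
      ∫⁻ x, edist θ₀ (est x) ∂μ₀ + ∫⁻ x, edist θ₁ (est x) ∂μ₁ :=
  calc edist θ₀ θ₁ * (μ₀ ⊓ μ₁) Set.univ
      = ∫⁻ _, edist θ₀ θ₁ ∂(μ₀ ⊓ μ₁) := (lintegral_const _).symm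
    _ ≤ ∫⁻ x, (edist θ₀ (est x) + edist θ₁ (est x)) ∂(μ₀ ⊓ μ₁) :=
        lintegral_mono fun _ => edist_triangle_right _ _ _
    _ = ∫⁻ x, edist θ₀ (est x) ∂(μ₀ ⊓ μ₁) + ∫⁻ x, edist θ₁ (est x) ∂(μ₀ ⊓ μ₁) :=
        lintegral_add_left' (h_meas.mono_measure inf_le_left) _
    _ ≤ ∫⁻ x, edist θ₀ (est x) ∂μ₀ + ∫⁻ x, edist θ₁ (est x) ∂μ₁ :=
        add_le_add (lintegral_mono' inf_le_left le_rfl) (lintegral_mono' inf_le_right le_rfl)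

theorem le_cam_lemma_general {ι : Type*} [Fintype ι] {E : ι → Type*}
    [∀ i, MeasurableSpace (E i)] (P₀ P₁ : ∀ i, Measure (E i))
    [∀ i, IsProbabilityMeasure (P₀ i)] [∀ i, IsProbabilityMeasure (P₁ i)]
    {M : Type*} [PseudoEMetricSpace M] (θ₀ θ₁ : M) (est : (∀ i, E i) → M)
    (h_meas : AEMeasurable (fun x => edist θ₀ (est x)) (Measure.pi P₀)) :
    edist θ₀ θ₁ / 2 * ∏ i, ENNReal.ofReal (1 - tvDist (P₀ i) (P₁ i)) ≤
      max (∫⁻ x, edist θ₀ (est x) ∂(Measure.pi P₀))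
        (∫⁻ x, edist θ₁ (est x) ∂(Measure.pi P₁)) := by
  rw [← ENNReal.mul_div_right_comm]
  refine ENNReal.div_le_of_le_mul ?_
  calc edist θ₀ θ₁ * ∏ i, ENNReal.ofReal (1 - tvDist (P₀ i) (P₁ i))
      ≤ edist θ₀ θ₁ * (Measure.pi P₀ ⊓ Measure.pi P₁) Set.univ := by
        gcongr
        exact prod_ofReal_one_sub_tvDist_le P₀ P₁
    _ ≤ ∫⁻ x, edist θ₀ (est x) ∂(Measure.pi P₀) + ∫⁻ x, edist θ₁ (est x) ∂(Measure.pi P₁) :=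
        edist_mul_inf_univ_le_lintegral_add θ₀ θ₁ h_meas
    _ ≤ _ := by
        rw [mul_two]
        exact add_le_add (le_max_left _ _) (le_max_right _ _)

lemma ofReal_eighth_mul_pow_two_mul_le {d a : ℝ} (hd : 0 ≤ d) (ha₀ : 0 ≤ a) (ha₁ : a ≤ 1) (n : ℕ) :
    ENNReal.ofReal (1 / 8 * d * a ^ (2 * n)) ≤ ENNReal.ofReal d / 2 * ENNReal.ofReal a ^ n := by
  rw [← ENNReal.ofReal_ofNat 2, ← ENNReal.ofReal_div_of_pos two_pos, ← ENNReal.ofReal_pow ha₀,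
    ← ENNReal.ofReal_mul (by positivity)]
  have h_pow : a ^ (2 * n) ≤ a ^ n := pow_le_pow_of_le_one ha₀ ha₁ (by lia)
  gcongr ENNReal.ofReal (?_ * ?_)
  linarith

/-- **Le Cam's Lemma.** For probability measures `P₀, P₁` on a measurable
space `E`, points `θ₀, θ₁` in a pseudometric space `M`, and an estimator
`est : Eⁿ → M`, the maximum of the two expected risks `E_{Pᵢⁿ}[ρ(θᵢ, est)]` is at least
`(1/8) ρ(θ₀, θ₁) (1 − TV(P₀, P₁))^{2n}`, where
`TV(P₀, P₁) = sup_{B measurable} |P₀(B) − P₁(B)|`. -/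
theorem le_cam_lemma {E : Type*} [MeasurableSpace E]
    (P₀ P₁ : Measure E) [IsProbabilityMeasure P₀] [IsProbabilityMeasure P₁]
    {M : Type*} [PseudoMetricSpace M] (θ₀ θ₁ : M) (n : ℕ)
    (est : (Fin n → E) → M)
    (hm0 : Measurable fun x => dist θ₀ (est x))
    (hm1 : Measurable fun x => dist θ₁ (est x)) :
    ENNReal.ofReal ((1 / 8) * dist θ₀ θ₁ *
        (1 - ⨆ B : {B : Set E // MeasurableSet B},
            |(P₀ B.1).toReal - (P₁ B.1).toReal|) ^ (2 * n)) ≤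
      max (∫⁻ x, ENNReal.ofReal (dist θ₀ (est x)) ∂(Measure.pi fun _ : Fin n => P₀))
        (∫⁻ x, ENNReal.ofReal (dist θ₁ (est x)) ∂(Measure.pi fun _ : Fin n => P₁)) := by
  have h_const := ofReal_eighth_mul_pow_two_mul_le (dist_nonneg (x := θ₀) (y := θ₁))
    (sub_nonneg.2 (tvDist_le_one P₀ P₁)) (sub_le_self 1 (tvDist_nonneg P₀ P₁)) n
  refine h_const.trans ?_
  simpa [edist_dist] using le_cam_lemma_general (fun _ => P₀) (fun _ => P₁) θ₀ θ₁ est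
    (by simpa only [edist_dist] using hm0.ennreal_ofReal.aemeasurable)
end
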